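/- Let χ_Λ be a smooth cutoff supported in {ρ ≤ Λ}, 0 ≤ χ_Λ ≤ 1. There is C > 0 such that for all 0 < α < 1 and L > 1, with y = L/α, |∫₀^∞ χ_Λ(σ/y)² · σ/(yα² + σ) · (2 sin(2σ) + cos(2σ)/σ − sin(2σ)/(2σ²)) dσ| ≤ C, and consequently the quantity J = −(2/(πy)) times this integral satisfies J = O(α/L). -/

import Mathlib

open Real MeasureTheory

/-!
The bracket is the derivative of `F σ = sin (2σ) / (2σ) - cos (2σ)`, which is bounded by `2` and
vanishes at the origin. If `A` is the amplitude multiplying the bracket and `A → 0` at infinity,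
integration by parts bounds the integral by `2 ∫ |A'|`. Here `A σ = φ (σ / y) * (σ / (a + σ))` with
`φ = χ²`: the second factor increases from `0` to `1`, and the total variation of `σ ↦ φ (σ / y)`
does not depend on `y`, so `∫ |A'| ≤ 2 ∫ |φ'|` uniformly in `a, y > 0`.
-/

open Set Filter Topology

lemma integrableOn_Ioi_mul_of_hasDerivAt_of_norm_le {A : Type*} [NormedRing A] [NormedSpace ℝ A]
    {g v v' : ℝ → A} {a B : ℝ} (hg : IntegrableOn g (Ioi a))
    (hv : ∀ x ∈ Ioi a, HasDerivAt v (v' x) x) (hvB : ∀ x ∈ Ioi a, ‖v x‖ ≤ B) :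
    IntegrableOn (fun x => g x * v x) (Ioi a) :=
  hg.mul_bdd
    (ContinuousOn.aestronglyMeasurable (fun x hx => (hv x hx).continuousAt.continuousWithinAt)
      measurableSet_Ioi)
    (ae_restrict_of_forall_mem measurableSet_Ioi hvB)

lemma norm_le_integral_norm_deriv_of_tendsto_zero {E : Type*} [NormedAddCommGroup E]
    [NormedSpace ℝ E] [CompleteSpace E] {f f' : ℝ → E} {a x : ℝ}
    (hf : ∀ t ∈ Ioi a, HasDerivAt f (f' t) t) (hf' : IntegrableOn f' (Ioi a))
    (hf_top : Tendsto f atTop (𝓝 0)) (hx : a < x) :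
    ‖f x‖ ≤ ∫ t in Ioi a, ‖f' t‖ := by
  have hsub : Ioi x ⊆ Ioi a := Ioi_subset_Ioi hx.le
  have hftc : ∫ t in Ioi x, f' t = 0 - f x :=
    integral_Ioi_of_hasDerivAt_of_tendsto' (fun t ht => hf t (hx.trans_le ht))
      (hf'.mono_set hsub) hf_top
  calc ‖f x‖ = ‖∫ t in Ioi x, f' t‖ := by rw [hftc, zero_sub, norm_neg]
    _ ≤ ∫ t in Ioi x, ‖f' t‖ := norm_integral_le_integral_norm _
    _ ≤ ∫ t in Ioi a, ‖f' t‖ :=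
      setIntegral_mono_set hf'.norm (Eventually.of_forall fun _ => norm_nonneg _)
        hsub.eventuallyLE

section IntegrationByParts

variable {A : Type*} [NormedRing A] [NormedAlgebra ℝ A] [CompleteSpace A]
  {f f' w w' v v' : ℝ → A} {a W B : ℝ}

lemma norm_integral_Ioi_mul_deriv_le (hf : ∀ x ∈ Ioi a, HasDerivAt f (f' x) x)
    (hf' : IntegrableOn f' (Ioi a)) (hf_top : Tendsto f atTop (𝓝 0))
    (hv : ∀ x ∈ Ioi a, HasDerivAt v (v' x) x) (hvB : ∀ x ∈ Ioi a, ‖v x‖ ≤ B)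
    (hv_left : Tendsto v (𝓝[>] a) (𝓝 0)) (hfv' : IntegrableOn (fun x => f x * v' x) (Ioi a)) :
    ‖∫ x in Ioi a, f x * v' x‖ ≤ B * ∫ x in Ioi a, ‖f' x‖ := by
  have hfV : ∀ᶠ x in 𝓝[>] a, ‖f x‖ ≤ ∫ t in Ioi a, ‖f' t‖ :=
    eventually_mem_nhdsWithin.mono fun x hx =>
      norm_le_integral_norm_deriv_of_tendsto_zero hf hf' hf_top hx
  have hvB_top : ∀ᶠ x in atTop, ‖v x‖ ≤ B := (eventually_gt_atTop a).mono hvB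
  have hfv_left : Tendsto (f * v) (𝓝[>] a) (𝓝 0) :=
    isBoundedUnder_le_mul_tendsto_zero ⟨_, hfV⟩ hv_left
  have hfv_top : Tendsto (f * v) atTop (𝓝 0) :=
    hf_top.zero_mul_isBoundedUnder_le ⟨_, hvB_top⟩
  have hf'v : IntegrableOn (fun x => f' x * v x) (Ioi a) :=
    integrableOn_Ioi_mul_of_hasDerivAt_of_norm_le hf' hv hvB
  rw [integral_Ioi_mul_deriv_eq_deriv_mul hf hv hfv' hf'v hfv_left hfv_top, sub_self, zero_sub,
    norm_neg, ← integral_const_mul]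
  refine norm_integral_le_of_norm_le (hf'.norm.const_mul B)
    (ae_restrict_of_forall_mem measurableSet_Ioi fun x hx => ?_)
  rw [mul_comm B]
  exact norm_mul_le_of_le le_rfl (hvB x hx)

lemma integrableOn_Ioi_mul_deriv_of_tendsto_zero (hf : ∀ x ∈ Ioi a, HasDerivAt f (f' x) x)
    (hf' : IntegrableOn f' (Ioi a)) (hf_top : Tendsto f atTop (𝓝 0))
    (hw' : IntegrableOn w' (Ioi a)) :
    IntegrableOn (fun x => f x * w' x) (Ioi a) :=
  hw'.bdd_mul
    (ContinuousOn.aestronglyMeasurable (fun x hx => (hf x hx).continuousAt.continuousWithinAt)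
      measurableSet_Ioi)
    (ae_restrict_of_forall_mem measurableSet_Ioi fun _ hx =>
      norm_le_integral_norm_deriv_of_tendsto_zero hf hf' hf_top hx)

lemma integral_norm_deriv_mul_le (hf : ∀ x ∈ Ioi a, HasDerivAt f (f' x) x)
    (hf' : IntegrableOn f' (Ioi a)) (hf_top : Tendsto f atTop (𝓝 0))
    (hw' : IntegrableOn w' (Ioi a)) (hwW : ∀ x ∈ Ioi a, ‖w x‖ ≤ W) :
    ∫ x in Ioi a, ‖f' x * w x + f x * w' x‖ ≤
      (W + ∫ x in Ioi a, ‖w' x‖) * ∫ x in Ioi a, ‖f' x‖ := by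
  set V := ∫ x in Ioi a, ‖f' x‖ with hV
  have hpointwise : ∀ x ∈ Ioi a, ‖f' x * w x + f x * w' x‖ ≤ W * ‖f' x‖ + V * ‖w' x‖ := by
    intro x hx
    have hfV : ‖f x‖ ≤ V := norm_le_integral_norm_deriv_of_tendsto_zero hf hf' hf_top hx
    calc ‖f' x * w x + f x * w' x‖
        ≤ ‖f' x‖ * ‖w x‖ + ‖f x‖ * ‖w' x‖ :=
          norm_add_le_of_le (norm_mul_le _ _) (norm_mul_le _ _)
      _ ≤ ‖f' x‖ * W + V * ‖w' x‖ := by gcongr; exact hwW x hx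
      _ = W * ‖f' x‖ + V * ‖w' x‖ := by rw [mul_comm W]
  calc ∫ x in Ioi a, ‖f' x * w x + f x * w' x‖
      ≤ ∫ x in Ioi a, (W * ‖f' x‖ + V * ‖w' x‖) :=
        integral_mono_of_nonneg (Eventually.of_forall fun _ => norm_nonneg _)
          ((hf'.norm.const_mul W).add (hw'.norm.const_mul V))
          (ae_restrict_of_forall_mem measurableSet_Ioi hpointwise)
    _ = (W + ∫ x in Ioi a, ‖w' x‖) * V := by
        rw [integral_add (hf'.norm.const_mul W) (hw'.norm.const_mul V), integral_const_mul,
          integral_const_mul, ← hV]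
        ring

lemma norm_integral_Ioi_mul_mul_deriv_le (hf : ∀ x ∈ Ioi a, HasDerivAt f (f' x) x)
    (hf' : IntegrableOn f' (Ioi a)) (hf_top : Tendsto f atTop (𝓝 0))
    (hw : ∀ x ∈ Ioi a, HasDerivAt w (w' x) x) (hw' : IntegrableOn w' (Ioi a))
    (hwW : ∀ x ∈ Ioi a, ‖w x‖ ≤ W) (hv : ∀ x ∈ Ioi a, HasDerivAt v (v' x) x)
    (hvB : ∀ x ∈ Ioi a, ‖v x‖ ≤ B) (hv_left : Tendsto v (𝓝[>] a) (𝓝 0))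
    (hfwv' : IntegrableOn (fun x => f x * w x * v' x) (Ioi a)) :
    ‖∫ x in Ioi a, f x * w x * v' x‖ ≤
      B * ((W + ∫ x in Ioi a, ‖w' x‖) * ∫ x in Ioi a, ‖f' x‖) := by
  have hB : 0 ≤ B := (norm_nonneg _).trans (hvB (a + 1) (lt_add_one a))
  have hfw_top : Tendsto (fun x => f x * w x) atTop (𝓝 0) :=
    hf_top.zero_mul_isBoundedUnder_le ⟨W, (eventually_gt_atTop a).mono hwW⟩
  have hfw' : IntegrableOn (fun x => f' x * w x + f x * w' x) (Ioi a) :=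
    (integrableOn_Ioi_mul_of_hasDerivAt_of_norm_le hf' hw hwW).add
      (integrableOn_Ioi_mul_deriv_of_tendsto_zero hf hf' hf_top hw')
  calc ‖∫ x in Ioi a, f x * w x * v' x‖
      ≤ B * ∫ x in Ioi a, ‖f' x * w x + f x * w' x‖ :=
        norm_integral_Ioi_mul_deriv_le (fun x hx => (hf x hx).mul (hw x hx)) hfw' hfw_top hv hvB
          hv_left hfwv'
    _ ≤ B * ((W + ∫ x in Ioi a, ‖w' x‖) * ∫ x in Ioi a, ‖f' x‖) := by
        gcongr
        exact integral_norm_deriv_mul_le hf hf' hf_top hw' hwW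

end IntegrationByParts

lemma hasDerivAt_div_const_add {a x : ℝ} (hx : a + x ≠ 0) :
    HasDerivAt (fun s => s / (a + s)) (a / (a + x) ^ 2) x := by
  refine ((hasDerivAt_id x).div ((hasDerivAt_id x).const_add a) hx).congr_deriv ?_
  simp

lemma tendsto_div_const_add_atTop (a : ℝ) : Tendsto (fun s => s / (a + s)) atTop (𝓝 1) := by
  have hdecay : Tendsto (fun s => 1 - a / (a + s)) atTop (𝓝 (1 - 0)) :=
    tendsto_const_nhds.sub
      (tendsto_const_nhds.div_atTop (tendsto_atTop_add_const_left _ a tendsto_id))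
  rw [sub_zero] at hdecay
  refine hdecay.congr' ?_
  filter_upwards [eventually_gt_atTop (-a)] with s hs
  have hs0 : a + s ≠ 0 := by linarith
  field_simp
  ring

lemma norm_div_const_add_le_one {a x : ℝ} (ha : 0 ≤ a) (hx : 0 ≤ x) : ‖x / (a + x)‖ ≤ 1 := by
  rw [norm_of_nonneg (by positivity)]
  exact div_le_one_of_le₀ (by linarith) (by positivity)

lemma integrableOn_Ioi_const_div_const_add_sq {a : ℝ} (ha : 0 < a) :
    IntegrableOn (fun x => a / (a + x) ^ 2) (Ioi 0) :=
  integrableOn_Ioi_deriv_of_nonneg'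
    (fun _ hx => hasDerivAt_div_const_add (add_pos_of_pos_of_nonneg ha hx).ne')
    (fun _ _ => by positivity) (tendsto_div_const_add_atTop a)

lemma integral_Ioi_const_div_const_add_sq {a : ℝ} (ha : 0 < a) :
    ∫ x in Ioi (0 : ℝ), a / (a + x) ^ 2 = 1 := by
  rw [integral_Ioi_of_hasDerivAt_of_nonneg'
    (fun _ hx => hasDerivAt_div_const_add (add_pos_of_pos_of_nonneg ha hx).ne')
    (fun _ _ => by positivity) (tendsto_div_const_add_atTop a), zero_div, sub_zero]

/-- The bracket of the oscillatory integral. At `σ = 0` the convention `x / 0 = 0` assigns it the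
value `0`, which is also its limit there. -/
noncomputable def oscillatoryKernel (σ : ℝ) : ℝ :=
  2 * sin (2 * σ) + cos (2 * σ) / σ - sin (2 * σ) / (2 * σ ^ 2)

/-- The primitive of `oscillatoryKernel` that vanishes at the origin; `sinc (2 * σ)` stands for
`sin (2 * σ) / (2 * σ)`, extended continuously. -/
noncomputable def oscillatoryPrimitive (σ : ℝ) : ℝ := sinc (2 * σ) - cos (2 * σ)

lemma hasDerivAt_oscillatoryPrimitive {σ : ℝ} (hσ : σ ≠ 0) :
    HasDerivAt oscillatoryPrimitive (oscillatoryKernel σ) σ := by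
  have hlin : HasDerivAt (fun s : ℝ => 2 * s) 2 σ := by
    simpa only [id, mul_one] using (hasDerivAt_id σ).const_mul 2
  have hquot := (hlin.sin.div hlin (mul_ne_zero two_ne_zero hσ)).sub hlin.cos
  refine (hquot.congr_of_eventuallyEq ?_).congr_deriv ?_
  · filter_upwards [eventually_ne_nhds hσ] with s hs
    rw [oscillatoryPrimitive, sinc_of_ne_zero (mul_ne_zero two_ne_zero hs)]
    rfl
  · unfold oscillatoryKernel
    field_simp
    ring

lemma norm_oscillatoryPrimitive_le (σ : ℝ) : ‖oscillatoryPrimitive σ‖ ≤ 2 :=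
  (norm_sub_le_of_le (abs_sinc_le_one _) (abs_cos_le_one _)).trans_eq one_add_one_eq_two

lemma tendsto_oscillatoryPrimitive_nhdsGT_zero : Tendsto oscillatoryPrimitive (𝓝[>] 0) (𝓝 0) := by
  have hcont : Continuous oscillatoryPrimitive :=
    (continuous_sinc.comp (continuous_const_mul 2)).sub (by fun_prop)
  have hzero : oscillatoryPrimitive 0 = 0 := by simp [oscillatoryPrimitive]
  simpa only [hzero] using (hcont.tendsto 0).mono_left nhdsWithin_le_nhds

lemma abs_mul_cos_sub_sin_le_sq (x : ℝ) : |x * cos x - sin x| ≤ x ^ 2 := by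
  have hderiv : ∀ t ∈ uIcc 0 x,
      HasDerivWithinAt (fun t => t * cos t - sin t) (-(t * sin t)) (uIcc 0 x) t := fun t _ =>
    ((((hasDerivAt_id t).mul (hasDerivAt_cos t)).sub (hasDerivAt_sin t)).congr_deriv
      (by simp)).hasDerivWithinAt
  have hbound : ∀ t ∈ uIcc 0 x, ‖-(t * sin t)‖ ≤ |x| := fun t ht => by
    have htx : |t| ≤ |x| := by simpa using abs_sub_left_of_mem_uIcc ht
    rw [norm_neg, norm_mul, norm_eq_abs, norm_eq_abs]
    exact (mul_le_of_le_one_right (abs_nonneg t) (abs_sin_le_one t)).trans htx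
  simpa [← sq] using (convex_uIcc 0 x).norm_image_sub_le_of_norm_hasDerivWithin_le hderiv hbound
    left_mem_uIcc right_mem_uIcc

lemma norm_oscillatoryKernel_le (σ : ℝ) : ‖oscillatoryKernel σ‖ ≤ 4 := by
  have hsplit : oscillatoryKernel σ =
      2 * sin (2 * σ) + (2 * σ * cos (2 * σ) - sin (2 * σ)) / (2 * σ ^ 2) := by
    rcases eq_or_ne σ 0 with rfl | hσ
    · simp [oscillatoryKernel]
    · unfold oscillatoryKernel
      field_simp
      ring
  have hsin : |2 * sin (2 * σ)| ≤ 2 := by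
    rw [abs_mul, abs_two]
    exact mul_le_of_le_one_right zero_le_two (abs_sin_le_one _)
  have htaylor : |(2 * σ * cos (2 * σ) - sin (2 * σ)) / (2 * σ ^ 2)| ≤ 2 := by
    rw [abs_div, abs_of_nonneg (by positivity : 0 ≤ 2 * σ ^ 2)]
    refine div_le_of_le_mul₀ (by positivity) zero_le_two ?_
    exact (abs_mul_cos_sub_sin_le_sq (2 * σ)).trans_eq (by ring)
  calc ‖oscillatoryKernel σ‖ ≤ 2 + 2 := by rw [hsplit]; exact norm_add_le_of_le hsin htaylor
    _ = 4 := by norm_num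

lemma aestronglyMeasurable_oscillatoryKernel {μ : Measure ℝ} :
    AEStronglyMeasurable oscillatoryKernel μ := by
  unfold oscillatoryKernel
  exact (by fun_prop : Measurable _).aestronglyMeasurable

lemma abs_integral_mul_oscillatoryKernel_le {φ φ' : ℝ → ℝ} {a : ℝ}
    (hφ : ∀ σ ∈ Ioi 0, HasDerivAt φ (φ' σ) σ) (hφ_int : IntegrableOn φ (Ioi 0))
    (hφ'_int : IntegrableOn φ' (Ioi 0)) (ha : 0 < a) :
    |∫ σ in Ioi 0, φ σ * (σ / (a + σ)) * oscillatoryKernel σ| ≤ 4 * ∫ σ in Ioi 0, |φ' σ| := by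
  have hw : ∀ σ ∈ Ioi 0, HasDerivAt (fun s => s / (a + s)) (a / (a + σ) ^ 2) σ := fun σ hσ =>
    hasDerivAt_div_const_add (add_pos ha hσ).ne'
  have hw_le : ∀ σ ∈ Ioi 0, ‖σ / (a + σ)‖ ≤ 1 := fun σ hσ =>
    norm_div_const_add_le_one ha.le (mem_Ioi.1 hσ).le
  have hprod_int : IntegrableOn (fun σ => φ σ * (σ / (a + σ)) * oscillatoryKernel σ) (Ioi 0) :=
    (integrableOn_Ioi_mul_of_hasDerivAt_of_norm_le hφ_int hw hw_le).mul_bdd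
      aestronglyMeasurable_oscillatoryKernel (Eventually.of_forall norm_oscillatoryKernel_le)
  have hparts := norm_integral_Ioi_mul_mul_deriv_le hφ hφ'_int
    (tendsto_zero_of_hasDerivAt_of_integrableOn_Ioi hφ hφ'_int hφ_int) hw
    (integrableOn_Ioi_const_div_const_add_sq ha) hw_le
    (fun σ hσ => hasDerivAt_oscillatoryPrimitive (mem_Ioi.1 hσ).ne')
    (fun σ _ => norm_oscillatoryPrimitive_le σ) tendsto_oscillatoryPrimitive_nhdsGT_zero hprod_int
  have hw_var : ∫ σ in Ioi (0 : ℝ), ‖a / (a + σ) ^ 2‖ = 1 := by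
    simpa only [norm_of_nonneg (div_nonneg ha.le (sq_nonneg _))] using
      integral_Ioi_const_div_const_add_sq ha
  rw [hw_var] at hparts
  exact hparts.trans_eq (by simp only [norm_eq_abs]; ring)

lemma integrableOn_Ioi_zero_comp_div {E : Type*} [NormedAddCommGroup E] {g : ℝ → E} {y : ℝ}
    (hg : IntegrableOn g (Ioi 0)) (hy : 0 < y) : IntegrableOn (fun x => g (x / y)) (Ioi 0) := by
  simpa only [div_eq_inv_mul] using
    (integrableOn_Ioi_comp_mul_left_iff g 0 (inv_pos.2 hy)).2 (by rwa [mul_zero])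

lemma integral_Ioi_zero_abs_comp_div_div (g : ℝ → ℝ) {y : ℝ} (hy : 0 < y) :
    ∫ x in Ioi 0, |g (x / y) / y| = ∫ x in Ioi 0, |g x| := by
  have hsubst : ∫ x in Ioi 0, |g (x / y)| = y * ∫ x in Ioi 0, |g x| := by
    simpa only [← div_eq_inv_mul, mul_zero, inv_inv, smul_eq_mul] using
      integral_comp_mul_left_Ioi (fun x => |g x|) 0 (inv_pos.2 hy)
  simp only [abs_div, abs_of_pos hy]
  rw [integral_div, hsubst, mul_div_cancel_left₀ _ hy.ne']

lemma abs_integral_comp_div_mul_oscillatoryKernel_le {φ φ' : ℝ → ℝ} {a y : ℝ}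
    (hφ : ∀ ρ ∈ Ioi 0, HasDerivAt φ (φ' ρ) ρ) (hφ_int : IntegrableOn φ (Ioi 0))
    (hφ'_int : IntegrableOn φ' (Ioi 0)) (ha : 0 < a) (hy : 0 < y) :
    |∫ σ in Ioi 0, φ (σ / y) * (σ / (a + σ)) * oscillatoryKernel σ| ≤
      4 * ∫ ρ in Ioi 0, |φ' ρ| := by
  have hderiv : ∀ σ ∈ Ioi 0, HasDerivAt (fun s => φ (s / y)) (φ' (σ / y) / y) σ := fun σ hσ =>
    ((hφ _ (div_pos hσ hy)).comp σ ((hasDerivAt_id σ).div_const y)).congr_deriv (by ring)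
  rw [← integral_Ioi_zero_abs_comp_div_div φ' hy]
  exact abs_integral_mul_oscillatoryKernel_le hderiv (integrableOn_Ioi_zero_comp_div hφ_int hy)
    ((integrableOn_Ioi_zero_comp_div hφ'_int hy).div_const y) ha

theorem oscillatory_integral_bounded_general {φ φ' : ℝ → ℝ}
    (hφ : ∀ ρ ∈ Ioi 0, HasDerivAt φ (φ' ρ) ρ) (hφ_int : IntegrableOn φ (Ioi 0))
    (hφ'_int : IntegrableOn φ' (Ioi 0)) :
    ∃ C > (0 : ℝ), ∀ α L : ℝ, 0 < α → 0 < L →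
      (|∫ σ in Ioi (0 : ℝ), φ (σ / (L / α)) * (σ / ((L / α) * α ^ 2 + σ)) *
          (2 * sin (2 * σ) + cos (2 * σ) / σ - sin (2 * σ) / (2 * σ ^ 2))| ≤ C) ∧
      (|(-(2 / (π * (L / α)))) *
          ∫ σ in Ioi (0 : ℝ), φ (σ / (L / α)) * (σ / ((L / α) * α ^ 2 + σ)) *
            (2 * sin (2 * σ) + cos (2 * σ) / σ - sin (2 * σ) / (2 * σ ^ 2))| ≤ C * (α / L)) := by
  refine ⟨4 * (∫ ρ in Ioi 0, |φ' ρ|) + 1, by positivity, fun α L hα hL => ?_⟩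
  have hbound := (abs_integral_comp_div_mul_oscillatoryKernel_le hφ hφ_int hφ'_int
    (a := L / α * α ^ 2) (y := L / α) (by positivity) (by positivity)).trans (lt_add_one _).le
  have hprefactor : |-(2 / (π * (L / α)))| ≤ α / L := by
    rw [abs_neg, abs_of_pos (by positivity)]
    calc 2 / (π * (L / α)) = 2 / π * (α / L) := by field_simp
      _ ≤ α / L := mul_le_of_le_one_left (by positivity) ((div_le_one pi_pos).2 two_le_pi)
  refine ⟨hbound, ?_⟩
  rw [abs_mul, mul_comm (4 * _ + 1)]
  exact mul_le_mul hprefactor hbound (abs_nonneg _) (by positivity)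

lemma integrableOn_Ioi_of_continuous_of_eq_zero {E : Type*} [NormedAddCommGroup E] {f : ℝ → E}
    {b : ℝ} (hf : Continuous f) (hfb : ∀ x, b < x → f x = 0) (a : ℝ) :
    IntegrableOn f (Ioi a) :=
  (hf.integrableOn_Icc (a := a) (b := b)).of_forall_sdiff_eq_zero measurableSet_Ioi fun x hx =>
    hfb x (not_le.1 fun hxb => hx.2 ⟨(mem_Ioi.1 hx.1).le, hxb⟩)

/-- Boundedness of the rescaled 1D oscillatory integral, with `y = L/α`:
`|∫₀^∞ χ_Λ(σ/y)² σ/(yα² + σ) (2 sin 2σ + cos 2σ/σ − sin 2σ/(2σ²)) dσ| ≤ C` uniformly in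
`0 < α < 1`, `L > 1`; consequently `J = −(2/(πy))·(this integral) = O(α/L)`. -/
theorem oscillatory_integral_bounded (Λ : ℝ) (hΛ : 0 < Λ)
    (χ : ℝ → ℝ) (hχ : ContDiff ℝ (⊤ : ℕ∞) χ) (hχsupp : ∀ ρ, Λ < ρ → χ ρ = 0)
    (hχb : ∀ ρ, χ ρ ∈ Set.Icc (0 : ℝ) 1) :
    ∃ C > (0 : ℝ), ∀ α L : ℝ, 0 < α → α < 1 → 1 < L →
      (|∫ σ in Set.Ioi (0 : ℝ), (χ (σ / (L / α))) ^ 2 * (σ / ((L / α) * α ^ 2 + σ)) *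
          (2 * Real.sin (2 * σ) + Real.cos (2 * σ) / σ - Real.sin (2 * σ) / (2 * σ ^ 2))|
        ≤ C) ∧
      (|(-(2 / (π * (L / α)))) *
          ∫ σ in Set.Ioi (0 : ℝ), (χ (σ / (L / α))) ^ 2 * (σ / ((L / α) * α ^ 2 + σ)) *
            (2 * Real.sin (2 * σ) + Real.cos (2 * σ) / σ - Real.sin (2 * σ) / (2 * σ ^ 2))|
        ≤ C * (α / L)) := by
  have hχ_diff : Differentiable ℝ χ := hχ.differentiable (by simp)
  have hχ'_cont : Continuous (deriv χ) := hχ.continuous_deriv (by simp)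
  obtain ⟨C, hC, hbound⟩ := oscillatory_integral_bounded_general
    (fun ρ _ => (hχ_diff ρ).hasDerivAt.fun_pow 2)
    (integrableOn_Ioi_of_continuous_of_eq_zero (b := Λ) (by fun_prop)
      (fun ρ hρ => by simp [hχsupp ρ hρ]) 0)
    (integrableOn_Ioi_of_continuous_of_eq_zero (b := Λ) (by fun_prop)
      (fun ρ hρ => by simp [hχsupp ρ hρ]) 0)
  exact ⟨C, hC, fun α L hα _ hL => hbound α L hα (one_pos.trans hL)⟩
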